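/- arXiv:0808.2307 — 10 statements merged into one kernel-verified Lean document; each statement's English description precedes it below -/
import Mathlib

section
/- Let λ = (λ_1, …, λ_r) be a Ferrers shape with r rows and λ_r ≥ 1. Then the boolean number of the associated Ferrers graph satisfies B(λ) = Σ_{j=0}^{r} c_λ(r,j) · j^{λ_r}. -/
/-!
Write `m = λ_r`, `d = λ_{r-1} - λ_r` and `c(j) = c_λ(r-1, j)`. Summing the recursion for
`c_λ(r, j)` against `j ^ m` and shifting the index in its first half gives
`∑ j, c(j) * j ^ d * (j + 1) * ((j + 1) ^ m - j ^ m)`. On the other side, the numbers `c_λ(i, j)`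
depend only on the differences of consecutive rows, so `λ̄` and all the `λ̄[-ℓ]` with `ℓ ≤ m` share
the same `c`; by induction the recursion for `B` becomes
`∑ j, c(j) * j ^ d * (m * j ^ m + ∑ ℓ, C(m + 1, ℓ + 1) * j ^ (m - ℓ))`.
The two agree by the binomial theorem for `(j + 1) ^ (m + 1)`.

The identity holds for `λ_r = 0` as well (with `0 ^ 0 = 1`), and this generality is needed in the
induction, since the shape `λ̄[-ℓ]` may have an empty last row.
-/

/-- The coefficients `c_λ(i,j)` of a Ferrers shape `λ`, where `lam` is 1-indexed
(so the shape is `(lam 1, lam 2, …, lam r)`).  `c_λ(1,0) = −1`, `c_λ(1,1) = 1`,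
`c_λ(1,j) = 0` otherwise, and for `i ≥ 2`,
`c_λ(i,j) = j·(j−1)^(λ_{i−1}−λ_i)·c_λ(i−1,j−1) − (j+1)·j^(λ_{i−1}−λ_i)·c_λ(i−1,j)`
(with the convention `0^0 = 1`, which holds for `Monoid.npow` on `ℤ`). -/
def ferrersC (lam : ℕ → ℕ) : ℕ → ℤ → ℤ
  | 0, _ => 0
  | 1, j => if j = 0 then -1 else if j = 1 then 1 else 0
  | i + 2, j =>
      j * (j - 1) ^ (lam (i + 1) - lam (i + 2)) * ferrersC lam (i + 1) (j - 1)
        - (j + 1) * j ^ (lam (i + 1) - lam (i + 2)) * ferrersC lam (i + 1) j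

/-- The boolean number `B(λ)` of the Ferrers graph of the shape
`(lam 1, …, lam r)` (the number of spheres in the wedge-sum homotopy type of the
boolean complex): `B = 1` if `r = 1` and `λ_1 ≥ 1`, `B = 0` if `r = 1` and
`λ_1 = 0`, and for `r > 1`,
`B(λ) = λ_r·B(λ̄) + Σ_{ℓ=1}^{λ_r} C(λ_r+1, ℓ+1)·B(λ̄[−ℓ])`,
where `λ̄ = (λ_1, …, λ_{r−1})` and `λ̄[−ℓ] = (λ_1−ℓ, …, λ_{r−1}−ℓ)`. -/
def booleanB : ℕ → (ℕ → ℕ) → ℤ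
  | 0, _ => 0
  | 1, lam => if 1 ≤ lam 1 then 1 else 0
  | r + 2, lam =>
      (lam (r + 2) : ℤ) * booleanB (r + 1) lam
        + ∑ ℓ ∈ Finset.Icc 1 (lam (r + 2)),
            ((lam (r + 2) + 1).choose (ℓ + 1) : ℤ) * booleanB (r + 1) (fun i => lam i - ℓ)

theorem ferrersC_eq_zero (lam : ℕ → ℕ) (r : ℕ) :
    ∀ j : ℤ, (r : ℤ) + 1 < j → ferrersC lam (r + 1) j = 0 := by
  induction r with
  | zero =>
    intro j hj
    simp only [ferrersC]
    rw [if_neg (by omega), if_neg (by omega)]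
  | succ r ih =>
    intro j hj
    push_cast at hj
    simp only [ferrersC]
    rw [ih j (by omega), ih (j - 1) (by omega)]
    ring

/-- The coefficients only see the differences of consecutive rows. -/
theorem ferrersC_congr (lam mu : ℕ → ℕ) (r : ℕ)
    (h : ∀ i, 1 ≤ i → i < r + 1 → lam i - lam (i + 1) = mu i - mu (i + 1)) :
    ∀ j : ℤ, ferrersC lam (r + 1) j = ferrersC mu (r + 1) j := by
  induction r with
  | zero => intro j; simp only [ferrersC]
  | succ r ih =>
    have ih' := ih fun i h1 h2 => h i h1 (by omega)
    intro j
    simp only [ferrersC]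
    rw [ih' j, ih' (j - 1), h (r + 1) (by omega) (by omega)]

theorem shape_last_le (lam : ℕ → ℕ) (r : ℕ)
    (h : ∀ i, 1 ≤ i → i < r + 1 → lam (i + 1) ≤ lam i) :
    ∀ i, 1 ≤ i → i ≤ r + 1 → lam (r + 1) ≤ lam i := by
  induction r with
  | zero =>
    intro i h1 h2
    obtain rfl : i = 1 := by omega
    exact le_rfl
  | succ r ih =>
    intro i h1 h2
    rcases Nat.lt_or_ge (r + 1) i with hi | hi
    · obtain rfl : i = r + 1 + 1 := by omega
      exact le_rfl
    · exact (h (r + 1) (by omega) (by omega)).trans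
        (ih (fun i h1 h2 => h i h1 (by omega)) i h1 hi)

/-- The binomial expansion of `(x + 1) ^ (m + 1)` with its two leading terms split off. -/
theorem binomial_tail (m : ℕ) (x : ℤ) :
    (m : ℤ) * x ^ m + ∑ l ∈ Finset.Icc 1 m, ((m + 1).choose (l + 1) : ℤ) * x ^ (m - l)
      = (x + 1) * ((x + 1) ^ m - x ^ m) := by
  have h1 : (x + 1) ^ (m + 1) = x ^ (m + 1) + ((m : ℤ) + 1) * x ^ m
      + ∑ l ∈ Finset.Icc 1 m, ((m + 1).choose (l + 1) : ℤ) * x ^ (m - l) := by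
    rw [add_comm x 1, add_pow, Finset.sum_range_succ', Finset.sum_range_succ',
      ← Finset.Ico_add_one_right_eq_Icc, Finset.sum_Ico_eq_sum_range]
    simp only [Nat.add_sub_cancel, one_pow, one_mul, Nat.choose_zero_right, Nat.sub_zero,
      zero_add, Nat.choose_one_right, Nat.cast_one, mul_one]
    have h2 : ∀ k, x ^ (m + 1 - (k + 1 + 1)) * ((m + 1).choose (k + 1 + 1) : ℤ)
        = ((m + 1).choose (1 + k + 1) : ℤ) * x ^ (m - (1 + k)) := by
      intro k
      rw [show m + 1 - (k + 1 + 1) = m - (1 + k) by omega, add_comm 1 k, mul_comm]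
    simp only [h2]
    push_cast
    ring
  linear_combination -h1

/-- The theorem without positivity of the last row, which makes the induction go through. -/
theorem booleanB_succ_eq_sum (r : ℕ) : ∀ lam : ℕ → ℕ,
    (∀ i, 1 ≤ i → i < r + 1 → lam (i + 1) ≤ lam i) →
    booleanB (r + 1) lam =
      ∑ j ∈ Finset.range (r + 2), ferrersC lam (r + 1) (j : ℤ) * (j : ℤ) ^ (lam (r + 1)) := by
  induction r with
  | zero =>
    intro lam _
    rcases Nat.eq_zero_or_pos (lam 1) with h | h
    · simp [booleanB, ferrersC, Finset.sum_range_succ, h]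
    · simp [booleanB, ferrersC, Finset.sum_range_succ, h.ne', Nat.one_le_iff_ne_zero]
  | succ r ih =>
    intro lam hs
    have hs' : ∀ i, 1 ≤ i → i < r + 1 → lam (i + 1) ≤ lam i := fun i h1 h2 => hs i h1 (by omega)
    have hle : lam (r + 2) ≤ lam (r + 1) := hs (r + 1) (by omega) (by omega)
    obtain ⟨d, hd⟩ := Nat.exists_eq_add_of_le hle
    have hmin : ∀ i, 1 ≤ i → i ≤ r + 2 → lam (r + 2) ≤ lam i := shape_last_le lam (r + 1) hs
    have hB : ∀ l ∈ Finset.Icc 1 (lam (r + 2)),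
        ((lam (r + 2) + 1).choose (l + 1) : ℤ) * booleanB (r + 1) (fun i => lam i - l)
          = ∑ j ∈ Finset.range (r + 2), ferrersC lam (r + 1) (j : ℤ) * (j : ℤ) ^ d *
              (((lam (r + 2) + 1).choose (l + 1) : ℤ) * (j : ℤ) ^ (lam (r + 2) - l)) := by
      intro l hl
      rw [Finset.mem_Icc] at hl
      rw [ih (fun i => lam i - l) fun i h1 h2 => Nat.sub_le_sub_right (hs' i h1 h2) l,
        Finset.mul_sum]
      refine Finset.sum_congr rfl fun j _ => ?_
      rw [ferrersC_congr (fun i => lam i - l) lam r (fun i h1 h2 => by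
          have := hmin (i + 1) (by omega) (by omega)
          have := hmin i h1 (by omega)
          omega) j]
      rw [show lam (r + 1) - l = d + (lam (r + 2) - l) by omega, pow_add]
      ring
    have hL : booleanB (r + 2) lam = ∑ j ∈ Finset.range (r + 2),
        ferrersC lam (r + 1) (j : ℤ) * (j : ℤ) ^ d *
          (((j : ℤ) + 1) * (((j : ℤ) + 1) ^ lam (r + 2) - (j : ℤ) ^ lam (r + 2))) := by
      simp only [booleanB]
      rw [Finset.sum_congr rfl hB, Finset.sum_comm, ih lam hs', Finset.mul_sum,
        ← Finset.sum_add_distrib]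
      refine Finset.sum_congr rfl fun j _ => ?_
      rw [← binomial_tail, ← Finset.mul_sum, hd, pow_add]
      ring
    have hdiff : lam (r + 1) - lam (r + 1 + 1) = d := by
      change lam (r + 1) - lam (r + 2) = d
      omega
    rw [hL]
    simp only [ferrersC, sub_mul, Finset.sum_sub_distrib]
    -- Shift the index in the first sum; its `j = 0` term vanishes because of the factor `j`.
    -- In the second sum the top term vanishes because `c_λ(r + 1, r + 2) = 0`.
    rw [Finset.sum_range_succ' (fun j : ℕ => (j : ℤ) * _ * _ * _),
      Finset.sum_range_succ (fun j : ℕ => ((j : ℤ) + 1) * _ * _ * _),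
      ferrersC_eq_zero lam r ((r + 1 + 1 : ℕ) : ℤ) (by push_cast; omega),
      hdiff]
    simp only [Nat.cast_zero, zero_mul, mul_zero, add_zero]
    rw [← Finset.sum_sub_distrib]
    refine Finset.sum_congr rfl fun j _ => ?_
    push_cast
    rw [add_sub_cancel_right]
    ring

/-- **Theorem (thm:PowerSums).** For a Ferrers shape `λ = (λ_1, …, λ_r)` with
`r` rows and `λ_r ≥ 1`, the boolean number of the associated Ferrers graph is
`B(λ) = Σ_{j=0}^{r} c_λ(r,j)·j^{λ_r}`. -/
theorem boolean_eq_sum_c_pow (r : ℕ) (lam : ℕ → ℕ) (hr : 1 ≤ r)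
    (hshape : ∀ i, 1 ≤ i → i < r → lam (i + 1) ≤ lam i)
    (hpos : 1 ≤ lam r) :
    booleanB r lam =
      ∑ j ∈ Finset.range (r + 1), ferrersC lam r (j : ℤ) * (j : ℤ) ^ (lam r) := by
  obtain ⟨k, rfl⟩ := Nat.exists_eq_add_of_le' hr
  exact booleanB_succ_eq_sum k lam hshape
end

section
/- Let λ = (λ_1, …, λ_r) be a Ferrers shape with r rows. For every i with 1 ≤ i ≤ r, the i-th row of the triangle of coefficients sums to zero: Σ_{j=0}^{i} c_λ(i,j) = 0. -/
/-- The coefficients in row `i` vanish to the right of column `i`. -/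
theorem ferrersC_eq_zero_of_lt (lam : ℕ → ℕ) :
    ∀ (i : ℕ) (j : ℤ), (i : ℤ) < j → ferrersC lam i j = 0
  | 0, _, _ => by simp [ferrersC]
  | 1, j, h => by
      push_cast at h
      rw [ferrersC, if_neg (by omega), if_neg (by omega)]
  | i + 2, j, h => by
      push_cast at h
      rw [ferrersC, ferrersC_eq_zero_of_lt lam (i + 1) (j - 1) (by push_cast; omega),
        ferrersC_eq_zero_of_lt lam (i + 1) j (by push_cast; omega)]
      ring

/-- The telescoped form of the partial sums of a row below the first one. -/
theorem sum_range_ferrersC (lam : ℕ → ℕ) (i n : ℕ) :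
    ∑ j ∈ Finset.range (n + 1), ferrersC lam (i + 2) (j : ℤ)
      = -(((n : ℤ) + 1) * (n : ℤ) ^ (lam (i + 1) - lam (i + 2)) * ferrersC lam (i + 1) n) := by
  induction n with
  | zero => simp [ferrersC]
  | succ n ih =>
    rw [Finset.sum_range_succ, ih, ferrersC]
    push_cast
    rw [add_sub_cancel_right]
    ring

/-- For a Ferrers shape `λ = (λ_1, …, λ_r)` with `r` rows and every
`1 ≤ i ≤ r`, the `i`-th row of the triangle of coefficients sums to zero:
`Σ_{j=0}^{i} c_λ(i,j) = 0`. -/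
theorem c_row_sum_zero (r : ℕ) (lam : ℕ → ℕ)
    (hshape : ∀ i, 1 ≤ i → i < r → lam (i + 1) ≤ lam i)
    (i : ℕ) (hi1 : 1 ≤ i) (hi2 : i ≤ r) :
    ∑ j ∈ Finset.range (i + 1), ferrersC lam i (j : ℤ) = 0 := by
  match i, hi1 with
  | 1, _ => simp [Finset.sum_range_succ, ferrersC]
  | i + 2, _ =>
    rw [sum_range_ferrersC, ferrersC_eq_zero_of_lt lam (i + 1) _ (by push_cast; omega)]
    ring
end

section
/- Let λ = (λ_1, …, λ_r) be a Ferrers shape with r rows. For all integers i and j with 1 ≤ j ≤ i ≤ r, the coefficient c_λ(i,j) is nonzero and has sign (−1)^{i+j}; that is, (−1)^{i+j}·c_λ(i,j) > 0. (In particular, disregarding the j = 0 column, adjacent entries in each row of the triangle of coefficients have alternating signs.) -/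
/-- The sign-alternating recursion in column `j + 1` becomes subtraction-free after
multiplication by the sign. -/
lemma signed_ferrersC_succ (lam : ℕ → ℕ) (i j : ℕ) :
    (-1 : ℤ) ^ (i + 2 + (j + 1)) * ferrersC lam (i + 2) ((j + 1 : ℕ) : ℤ) =
      ((j : ℤ) + 1) * (j : ℤ) ^ (lam (i + 1) - lam (i + 2)) *
          ((-1 : ℤ) ^ (i + 1 + j) * ferrersC lam (i + 1) (j : ℤ))
        + ((j : ℤ) + 2) * ((j : ℤ) + 1) ^ (lam (i + 1) - lam (i + 2)) *
          ((-1 : ℤ) ^ (i + 1 + (j + 1)) * ferrersC lam (i + 1) ((j + 1 : ℕ) : ℤ)) := by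
  rw [ferrersC]
  push_cast
  rw [add_sub_cancel_right]
  ring

lemma signed_ferrersC_nonneg (lam : ℕ → ℕ) (i j : ℕ) :
    0 ≤ (-1 : ℤ) ^ (i + 1 + j) * ferrersC lam (i + 1) (j : ℤ) := by
  induction i generalizing j with
  | zero =>
    rcases j with _ | _ | j
    · simp [ferrersC]
    · simp [ferrersC]
    · have h0 : ((j + 1 + 1 : ℕ) : ℤ) ≠ 0 := by omega
      have h1 : ((j + 1 + 1 : ℕ) : ℤ) ≠ 1 := by omega
      simp only [zero_add, ferrersC, if_neg h0, if_neg h1, mul_zero, le_refl]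
  | succ i ih =>
    cases j with
    | zero =>
      have h : (-1 : ℤ) ^ (i + 1 + 1 + 0) * ferrersC lam (i + 1 + 1) ((0 : ℕ) : ℤ) =
          0 ^ (lam (i + 1) - lam (i + 2)) *
            ((-1 : ℤ) ^ (i + 1 + 0) * ferrersC lam (i + 1) ((0 : ℕ) : ℤ)) := by
        rw [ferrersC]
        push_cast
        ring
      rw [h]
      exact mul_nonneg (pow_nonneg le_rfl _) (ih 0)
    | succ j =>
      rw [signed_ferrersC_succ]
      exact add_nonneg (mul_nonneg (by positivity) (ih j))
        (mul_nonneg (by positivity) (ih (j + 1)))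

lemma signed_ferrersC_pos (lam : ℕ → ℕ) (i j : ℕ) (hji : j ≤ i) :
    0 < (-1 : ℤ) ^ (i + 1 + (j + 1)) * ferrersC lam (i + 1) ((j + 1 : ℕ) : ℤ) := by
  induction i generalizing j with
  | zero =>
    obtain rfl : j = 0 := by omega
    simp [ferrersC]
  | succ i ih =>
    rw [signed_ferrersC_succ]
    rcases Nat.lt_or_ge i j with h | h
    · obtain rfl : j = i + 1 := by omega
      exact add_pos_of_pos_of_nonneg (mul_pos (by positivity) (ih i le_rfl))
        (mul_nonneg (by positivity) (signed_ferrersC_nonneg lam i _))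
    · exact add_pos_of_nonneg_of_pos
        (mul_nonneg (by positivity) (signed_ferrersC_nonneg lam i _))
        (mul_pos (by positivity) (ih j h))

/-- For a Ferrers shape `λ = (λ_1, …, λ_r)` with `r` rows and all
`1 ≤ j ≤ i ≤ r`, the coefficient `c_λ(i,j)` is nonzero with sign
`(−1)^{i+j}`, i.e. `(−1)^{i+j}·c_λ(i,j) > 0`. -/
theorem c_sign_alternates (r : ℕ) (lam : ℕ → ℕ)
    (hshape : ∀ i, 1 ≤ i → i < r → lam (i + 1) ≤ lam i)
    (i j : ℕ) (hj : 1 ≤ j) (hji : j ≤ i) (hir : i ≤ r) :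
    0 < (-1 : ℤ) ^ (i + j) * ferrersC lam i (j : ℤ) := by
  obtain ⟨j, rfl⟩ := Nat.exists_eq_add_of_le' hj
  obtain ⟨i, rfl⟩ := Nat.exists_eq_add_of_le' (hj.trans hji)
  exact signed_ferrersC_pos lam i j (by omega)
end

section
/- Let σ_r = (r, r−1, …, 2, 1) be the staircase shape of height r ≥ 1. Then for all integers i and j with 1 ≤ j ≤ i ≤ r, one has (as rational numbers) c_{σ_r}(i,j) = (−1)^{i+j} · j! · (j−1)! · d(i,j), where d(i,j) is the Legendre–Stirling number. -/
/-- The Legendre–Stirling numbers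
`d(i,j) = Σ_{ℓ=1}^{j} (−1)^{ℓ+j}·(2ℓ+1)·(ℓ²+ℓ)^i / ((ℓ+j+1)!·(j−ℓ)!)`. -/
def legendreStirling (i j : ℕ) : ℚ :=
  ∑ ℓ ∈ Finset.Icc 1 j,
    (-1 : ℚ) ^ (ℓ + j) * (2 * ℓ + 1) * ((ℓ : ℚ) ^ 2 + ℓ) ^ i /
      ((Nat.factorial (ℓ + j + 1)) * (Nat.factorial (j - ℓ)))

/-- The triangular recurrence of the Legendre–Stirling numbers. -/
lemma legendreStirling_succ_succ (i j : ℕ) :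
    legendreStirling (i + 1) (j + 1) =
      legendreStirling i j + ((j : ℚ) + 1) * (j + 2) * legendreStirling i (j + 1) := by
  unfold legendreStirling
  rw [Finset.sum_Icc_succ_top (by omega), Finset.sum_Icc_succ_top (by omega),
    mul_add (((j : ℚ) + 1) * (j + 2)),
    Finset.mul_sum, ← add_assoc (Finset.sum _ _) (Finset.sum _ _), ← Finset.sum_add_distrib]
  congr 1
  · refine Finset.sum_congr rfl fun l hl => ?_
    obtain ⟨k, rfl⟩ := Nat.exists_eq_add_of_le (Finset.mem_Icc.mp hl).2
    rw [show l + k + 1 - l = k + 1 by omega, show l + k - l = k by omega,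
      show l + (l + k + 1) + 1 = (l + (l + k) + 1) + 1 by omega,
      Nat.factorial_succ (l + (l + k) + 1), Nat.factorial_succ k]
    have h1 : ((l + (l + k) + 1).factorial : ℚ) ≠ 0 := by positivity
    have h2 : (k.factorial : ℚ) ≠ 0 := by positivity
    have h3 : (l : ℚ) + (l + k) + 1 + 1 ≠ 0 := by positivity
    have h4 : (k : ℚ) + 1 ≠ 0 := by positivity
    push_cast
    field_simp
    ring
  · push_cast
    ring

/-- Closed form of the partial sums of `d(1, n+2)`, multiplied by `n + 1`. -/
lemma legendreStirling_one_partial_sum (n m : ℕ) (hm : m ≤ n + 2) :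
    ((n : ℚ) + 1) * ∑ ℓ ∈ Finset.Icc 1 m,
      (-1 : ℚ) ^ (ℓ + (n + 2)) * (2 * ℓ + 1) * ((ℓ : ℚ) ^ 2 + ℓ) ^ 1 /
        ((Nat.factorial (ℓ + (n + 2) + 1)) * (Nat.factorial (n + 2 - ℓ))) =
      (-1 : ℚ) ^ (m + (n + 2)) * m * (m + 1) * (m + 2) * ((n : ℚ) + 2 - m) /
        ((Nat.factorial (m + (n + 2) + 1)) * (Nat.factorial (n + 2 - m))) := by
  induction m with
  | zero => simp
  | succ m ih =>
    rw [Finset.sum_Icc_succ_top (by omega), mul_add, ih (by omega)]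
    obtain ⟨k, hk⟩ := Nat.exists_eq_add_of_le hm
    rw [show n + 2 - m = k + 1 by omega, show n + 2 - (m + 1) = k by omega,
      show m + 1 + (n + 2) + 1 = (m + (n + 2) + 1) + 1 by omega,
      Nat.factorial_succ (m + (n + 2) + 1), Nat.factorial_succ k]
    have hn : (n : ℚ) = m + k - 1 := by
      have : (n : ℚ) + 2 = m + 1 + k := by exact_mod_cast hk
      linarith
    have h1 : ((m + (n + 2) + 1).factorial : ℚ) ≠ 0 := by positivity
    have h2 : (k.factorial : ℚ) ≠ 0 := by positivity
    have h3 : (m : ℚ) + (n + 2) + 1 + 1 ≠ 0 := by positivity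
    have h4 : (k : ℚ) + 1 ≠ 0 := by positivity
    rw [show m + 1 + (n + 2) = (m + (n + 2)) + 1 by omega, pow_succ]
    push_cast
    generalize ((m + (n + 2) + 1).factorial : ℚ) = F at *
    generalize (-1 : ℚ) ^ (m + (n + 2)) = s
    rw [hn] at h3 ⊢
    field_simp
    ring

lemma legendreStirling_one_add_two (n : ℕ) : legendreStirling 1 (n + 2) = 0 := by
  have h := legendreStirling_one_partial_sum n (n + 2) le_rfl
  have hz : (n : ℚ) + 2 - ((n + 2 : ℕ) : ℚ) = 0 := by push_cast; ring
  rw [hz, mul_zero, zero_div] at h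
  exact (mul_eq_zero.mp h).resolve_left (by positivity)

/-- The identity with both indices shifted by one; `j` is unrestricted, as the induction on `i`
uses entries above the diagonal. -/
lemma ferrersC_staircase_succ_succ (r i : ℕ) (hi : i + 1 ≤ r) (j : ℕ) :
    (ferrersC (fun i => r + 1 - i) (i + 1) ((j : ℤ) + 1) : ℚ) =
      (-1 : ℚ) ^ (i + j) * (Nat.factorial (j + 1)) * (Nat.factorial j) *
        legendreStirling (i + 1) (j + 1) := by
  induction i generalizing j with
  | zero =>
    rcases j with _ | n
    · norm_num [ferrersC, legendreStirling, Nat.factorial]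
    · rw [legendreStirling_one_add_two, mul_zero]
      have h0 : ((n + 1 : ℕ) : ℤ) + 1 ≠ 0 := by omega
      have h1 : ((n + 1 : ℕ) : ℤ) + 1 ≠ 1 := by omega
      simp only [ferrersC, if_neg h0, if_neg h1, Int.cast_zero]
  | succ i ih =>
    have hd : r + 1 - (i + 1) - (r + 1 - (i + 2)) = 1 := by omega
    rw [legendreStirling_succ_succ, ferrersC]
    simp only [hd, pow_one, add_sub_cancel_right]
    push_cast
    rw [ih (by omega) j]
    rcases j with _ | n
    · -- The value `c(i, 0)` enters with coefficient zero, matching `d(i, 0) = 0`.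
      simp [legendreStirling]
      ring
    · have h := ih (by omega) n
      push_cast at h ⊢
      rw [h]
      simp only [Nat.factorial_succ]
      push_cast
      ring

/-- **Corollary (cor:L-S).** For the staircase shape `σ_r = (r, r−1, …, 2, 1)`
of height `r ≥ 1` and all `1 ≤ j ≤ i ≤ r`, one has, as rational numbers,
`c_{σ_r}(i,j) = (−1)^{i+j}·j!·(j−1)!·d(i,j)`, where `d(i,j)` is the
Legendre–Stirling number. -/
theorem c_staircase_eq_legendreStirling (r : ℕ) (hr : 1 ≤ r)
    (i j : ℕ) (hj : 1 ≤ j) (hji : j ≤ i) (hir : i ≤ r) :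
    (ferrersC (fun i => r + 1 - i) i (j : ℤ) : ℚ) =
      (-1 : ℚ) ^ (i + j) * (Nat.factorial j) * (Nat.factorial (j - 1)) *
        legendreStirling i j := by
  obtain ⟨i, rfl⟩ := Nat.exists_eq_add_of_le' (hj.trans hji)
  obtain ⟨j, rfl⟩ := Nat.exists_eq_add_of_le' hj
  have h := ferrersC_staircase_succ_succ r i hir j
  rw [Nat.add_sub_cancel, show i + 1 + (j + 1) = i + j + 2 by omega, pow_add]
  push_cast
  rw [h]
  ring
end

section
/- Let σ_r = (r, r−1, …, 2, 1) be the staircase shape of height r ≥ 1. Then the boolean number of the associated Ferrers graph satisfies (as rational numbers) B(σ_r) = Σ_{j=1}^{r} Σ_{ℓ=1}^{j} (−1)^{r+ℓ} · (2ℓ+1)·(ℓ²+ℓ)^r · j! · j! / ((ℓ+j+1)!·(j−ℓ)!). -/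
/-- The operator `p ↦ x (x+1) (p(x+1) - p(x))`, on arbitrary functions `ℕ → ℚ` rather than on
polynomials, since only values at natural numbers are used. -/
def diffOp : (ℕ → ℚ) →ₗ[ℚ] (ℕ → ℚ) where
  toFun p := fun n => (n : ℚ) * (n + 1) * (p (n + 1) - p n)
  map_add' p q := by
    funext n
    simp only [Pi.add_apply]
    ring
  map_smul' c p := by
    funext n
    simp only [Pi.smul_apply, smul_eq_mul, RingHom.id_apply]
    ring

theorem diffOp_apply (p : ℕ → ℚ) (n : ℕ) :
    diffOp p n = (n : ℚ) * (n + 1) * (p (n + 1) - p n) := rfl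

/-- The monomial `x ^ m` as a function on `ℕ`. -/
def monoFun (m : ℕ) : ℕ → ℚ := fun n => (n : ℚ) ^ m

/-- The expansion of `diffOp (x ^ m)` in monomials has the coefficients of the recursion
defining `booleanB`. -/
theorem diffOp_monoFun (m : ℕ) :
    diffOp (monoFun m) = (m : ℚ) • monoFun (m + 1)
      + ∑ ℓ ∈ Finset.Icc 1 m, ((m + 1).choose (ℓ + 1) : ℚ) • monoFun (m + 1 - ℓ) := by
  funext n
  have key : (n : ℚ) * ((n : ℚ) + 1) ^ (m + 1) = (n : ℚ) ^ (m + 2) + (m + 1) * (n : ℚ) ^ (m + 1)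
      + ∑ ℓ ∈ Finset.range m, ((m + 1).choose (ℓ + 2) : ℚ) * (n : ℚ) ^ (m - ℓ) := by
    rw [add_comm (n : ℚ) 1, add_pow, Finset.sum_range_succ', Finset.sum_range_succ', mul_add,
      mul_add, Finset.mul_sum]
    have : ∀ ℓ ∈ Finset.range m, (n : ℚ) * (1 ^ (ℓ + 1 + 1) * (n : ℚ) ^ (m + 1 - (ℓ + 1 + 1))
        * ((m + 1).choose (ℓ + 1 + 1) : ℚ)) =
        ((m + 1).choose (ℓ + 2) : ℚ) * (n : ℚ) ^ (m - ℓ) := by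
      intro ℓ hℓ
      have hlt := Finset.mem_range.mp hℓ
      obtain ⟨d, rfl⟩ := Nat.exists_eq_add_of_lt hlt
      have h1 : ℓ + d + 1 + 1 - (ℓ + 1 + 1) = d := by omega
      have h2 : ℓ + d + 1 - ℓ = d + 1 := by omega
      rw [h1, h2]
      ring
    rw [Finset.sum_congr rfl this]
    simp
    ring
  have hsum : ∑ ℓ ∈ Finset.Icc 1 m, ((m + 1).choose (ℓ + 1) : ℚ) * (n : ℚ) ^ (m + 1 - ℓ)
      = ∑ ℓ ∈ Finset.range m, ((m + 1).choose (ℓ + 2) : ℚ) * (n : ℚ) ^ (m - ℓ) := by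
    rw [← Finset.Ico_add_one_right_eq_Icc, Finset.sum_Ico_eq_sum_range]
    refine Finset.sum_congr (by simp) fun ℓ _ => ?_
    have h1 : 1 + ℓ + 1 = ℓ + 2 := by omega
    have h2 : m + 1 - (1 + ℓ) = m - ℓ := by omega
    rw [h1, h2]
  simp only [diffOp_apply, monoFun, Pi.add_apply, Finset.sum_apply, Pi.smul_apply, smul_eq_mul,
    hsum]
  push_cast
  linear_combination key

/-- The boolean number of `(m+k, …, m+1, m)` (with `k + 1` rows) as a value of the `k`-th iterate
of `diffOp`; the hypothesis constrains `lam` only on the rows that `booleanB` reads. -/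
theorem booleanB_eq_iterate (k : ℕ) : ∀ (m : ℕ) (lam : ℕ → ℕ),
    (∀ i, 1 ≤ i → i ≤ k + 1 → lam i = m + (k + 1) - i) →
    (booleanB (k + 1) lam : ℚ) = (diffOp ^ k) (monoFun m) 1 - (diffOp ^ k) (monoFun m) 0 := by
  induction k with
  | zero =>
    intro m lam h
    have h1 : lam 1 = m := by simpa using h 1 le_rfl le_rfl
    rcases Nat.eq_zero_or_pos m with rfl | hm
    · simp [booleanB, h1, monoFun]
    · have : 1 ≤ m := hm
      simp [booleanB, h1, monoFun, this, hm.ne']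
  | succ k ih =>
    intro m lam h
    have hlast : lam (k + 2) = m := by
      rw [h (k + 2) (by omega) (by omega)]
      omega
    have e0 := ih (m + 1) lam fun i h1 h2 => by
      rw [h i h1 (by omega)]
      omega
    have e1 : ∀ ℓ ∈ Finset.Icc 1 m, (booleanB (k + 1) (fun i => lam i - ℓ) : ℚ)
        = (diffOp ^ k) (monoFun (m + 1 - ℓ)) 1 - (diffOp ^ k) (monoFun (m + 1 - ℓ)) 0 := by
      intro ℓ hℓ
      rw [Finset.mem_Icc] at hℓ
      refine ih (m + 1 - ℓ) _ fun i h1 h2 => ?_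
      rw [h i h1 (by omega)]
      omega
    rw [booleanB, hlast, pow_succ, Module.End.mul_apply, diffOp_monoFun]
    push_cast
    rw [e0, Finset.sum_congr rfl fun ℓ hℓ => by rw [e1 ℓ hℓ]]
    simp only [map_add, map_sum, map_smul, Pi.add_apply, Finset.sum_apply, Pi.smul_apply,
      smul_eq_mul, mul_sub, Finset.sum_sub_distrib]
    ring

/-- The function `e_{j+1} = j! ((x+1)(x+2)⋯(x+j+1) - (j+1)!)`; note the index shift. -/
def stairBasis (j : ℕ) : ℕ → ℚ := fun n =>
  (j.factorial : ℚ) * (((n + 1).ascFactorial (j + 1) : ℕ) - ((j + 1).factorial : ℚ))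

theorem diffOp_stairBasis (j : ℕ) :
    diffOp (stairBasis j) = stairBasis (j + 1) - (((j : ℚ) + 1) * (j + 2)) • stairBasis j := by
  funext n
  have h : ((n : ℚ) + 1) * ((n + 1 + 1).ascFactorial (j + 1) : ℕ)
      = (n + 1 + (j + 1)) * ((n + 1).ascFactorial (j + 1) : ℕ) := by
    exact_mod_cast Nat.succ_ascFactorial (n + 1) (j + 1)
  have h2 : ((n + 1).ascFactorial (j + 1 + 1) : ℚ)
      = (n + 1 + (j + 1)) * ((n + 1).ascFactorial (j + 1) : ℕ) := by
    rw [Nat.ascFactorial_succ]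
    push_cast
    ring
  simp only [diffOp_apply, stairBasis, Pi.sub_apply, Pi.smul_apply, smul_eq_mul, h2,
    Nat.factorial_succ (j + 1), Nat.factorial_succ j]
  push_cast
  linear_combination (n : ℚ) * j.factorial * h

theorem stairBasis_zero : stairBasis 0 = monoFun 1 := by
  funext n
  simp [stairBasis, monoFun, Nat.ascFactorial_succ]

theorem stairBasis_diff (j : ℕ) :
    stairBasis j 1 - stairBasis j 0 = ((j + 1).factorial : ℚ) * (j + 1).factorial := by
  have h1 : ((1 + 1 : ℕ).ascFactorial (j + 1) : ℚ) = (j + 2) * (j + 1).factorial := by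
    have h := Nat.succ_ascFactorial 1 (j + 1)
    rw [Nat.one_ascFactorial] at h
    have h' : (((1 * (1 + 1 : ℕ).ascFactorial (j + 1) : ℕ)) : ℚ) = _ := congrArg Nat.cast h
    push_cast at h'
    linear_combination h'
  have h0 : ((0 + 1 : ℕ).ascFactorial (j + 1) : ℚ) = (j + 1).factorial := by
    rw [zero_add, Nat.one_ascFactorial]
  simp only [stairBasis, h1, h0, Nat.factorial_succ j]
  push_cast
  ring

/-- The weight `1 / ((ℓ+j+1)! (j-ℓ)!)`, with `1 / (j-ℓ)!` read as `0` for `ℓ > j`. -/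
def legWeight (j ℓ : ℕ) : ℚ :=
  if ℓ ≤ j then 1 / (((ℓ + j + 1).factorial : ℚ) * (j - ℓ).factorial) else 0

theorem legWeight_pred (j ℓ : ℕ) :
    legWeight j ℓ = ((j : ℚ) + ℓ + 2) * (j + 1 - ℓ) * legWeight (j + 1) ℓ := by
  unfold legWeight
  rcases Nat.lt_trichotomy ℓ (j + 1) with h | rfl | h
  · obtain ⟨d, rfl⟩ := Nat.exists_eq_add_of_le (Nat.lt_succ_iff.mp h)
    have h1 : ℓ + d - ℓ = d := by omega
    have h2 : ℓ + d + 1 - ℓ = d + 1 := by omega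
    rw [if_pos (by omega), if_pos (by omega), h1, h2, Nat.factorial_succ d,
      show ℓ + (ℓ + d + 1) + 1 = (ℓ + (ℓ + d) + 1) + 1 by ring,
      Nat.factorial_succ (ℓ + (ℓ + d) + 1)]
    have := Nat.factorial_ne_zero d
    have := Nat.factorial_ne_zero (ℓ + (ℓ + d) + 1)
    have h3 : (ℓ : ℚ) + (ℓ + d) + 1 + 1 ≠ 0 := by positivity
    push_cast
    field_simp
    ring
  · simp
  · rw [if_neg (by omega), if_neg (by omega), mul_zero]

/-- The signed Legendre–Stirling number
`∑_{ℓ ≤ j} (-1)^(n+ℓ) (2ℓ+1) (ℓ²+ℓ)^n / ((ℓ+j+1)! (j-ℓ)!)`. The term `ℓ = 0` contributes only when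
`n = 0`. -/
def legStir (n j : ℕ) : ℚ :=
  ∑ ℓ ∈ Finset.range (j + 1),
    (-1 : ℚ) ^ (n + ℓ) * (2 * ℓ + 1) * ((ℓ : ℚ) ^ 2 + ℓ) ^ n * legWeight j ℓ

theorem legStir_succ (n j : ℕ) :
    legStir (n + 1) (j + 1) = legStir n j - ((j : ℚ) + 1) * (j + 2) * legStir n (j + 1) := by
  -- The range may be extended by one since `legWeight j (j + 1) = 0`.
  have hext : legStir n j = ∑ ℓ ∈ Finset.range (j + 1 + 1),
      (-1 : ℚ) ^ (n + ℓ) * (2 * ℓ + 1) * ((ℓ : ℚ) ^ 2 + ℓ) ^ n * legWeight j ℓ := by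
    rw [Finset.sum_range_succ, legStir]
    simp [legWeight]
  rw [hext, legStir, legStir, Finset.mul_sum, ← Finset.sum_sub_distrib]
  refine Finset.sum_congr rfl fun ℓ _ => ?_
  rw [legWeight_pred j ℓ]
  ring

theorem legStir_succ_zero (n : ℕ) : legStir (n + 1) 0 = 0 := by
  simp [legStir]

theorem legStir_zero_zero : legStir 0 0 = 1 := by
  simp [legStir, legWeight]

theorem legWeight_step (j ℓ : ℕ) :
    ((j : ℚ) - ℓ) * legWeight j ℓ = (ℓ + j + 2) * legWeight j (ℓ + 1) := by
  unfold legWeight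
  rcases Nat.lt_trichotomy ℓ j with h | rfl | h
  · obtain ⟨d, rfl⟩ := Nat.exists_eq_add_of_lt h
    have h1 : ℓ + d + 1 - ℓ = d + 1 := by omega
    have h2 : ℓ + d + 1 - (ℓ + 1) = d := by omega
    rw [if_pos (by omega), if_pos (by omega), h1, h2, Nat.factorial_succ d,
      show ℓ + 1 + (ℓ + d + 1) + 1 = (ℓ + (ℓ + d + 1) + 1) + 1 by ring,
      Nat.factorial_succ (ℓ + (ℓ + d + 1) + 1)]
    have := Nat.factorial_ne_zero d
    have := Nat.factorial_ne_zero (ℓ + (ℓ + d + 1) + 1)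
    have h3 : (ℓ : ℚ) + (ℓ + d + 1) + 1 + 1 ≠ 0 := by positivity
    push_cast
    field_simp
    ring
  · simp
  · rw [if_neg (by omega), if_neg (by omega), mul_zero, mul_zero]

/-- The alternating sum telescopes: up to sign, its `L`-th partial sum is
`L / ((j+1) (L+j+1)! (j+1-L)!)`, rewritten here in terms of `legWeight`. -/
theorem legStir_zero_partial (j : ℕ) (L : ℕ) :
    ∑ ℓ ∈ Finset.range L, (-1 : ℚ) ^ ℓ * (2 * ℓ + 1) * legWeight (j + 1) ℓ
      = - (-1 : ℚ) ^ L * (L / (j + 1)) * (L + j + 2) * legWeight (j + 1) L := by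
  induction L with
  | zero => simp
  | succ L ih =>
    have h := legWeight_step (j + 1) L
    have h0 : (j : ℚ) + 1 ≠ 0 := by positivity
    rw [Finset.sum_range_succ, ih]
    push_cast at h ⊢
    field_simp
    linear_combination (-1 : ℚ) ^ L * (L + 1) * h

theorem legStir_zero (j : ℕ) : legStir 0 (j + 1) = 0 := by
  have h := legStir_zero_partial j (j + 1 + 1)
  simpa [legStir, legWeight] using h

theorem legStir_eq_zero (n : ℕ) : ∀ j, n < j → legStir n j = 0 := by
  induction n with
  | zero =>
    intro j hj
    obtain ⟨i, rfl⟩ := Nat.exists_eq_succ_of_ne_zero hj.ne'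
    exact legStir_zero i
  | succ n ih =>
    intro j hj
    obtain ⟨i, rfl⟩ := Nat.exists_eq_succ_of_ne_zero (Nat.ne_zero_of_lt hj)
    rw [Nat.succ_eq_add_one, legStir_succ, ih i (by omega), ih (i + 1) (by omega)]
    ring

theorem iterate_diffOp (k : ℕ) :
    (diffOp ^ k) (monoFun 1)
      = ∑ j ∈ Finset.range (k + 1), legStir (k + 1) (j + 1) • stairBasis j := by
  induction k with
  | zero => simp [legStir_succ, legStir_zero_zero, legStir_zero, stairBasis_zero]
  | succ k ih =>
    rw [pow_succ', Module.End.mul_apply, ih, map_sum]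
    simp only [map_smul, diffOp_stairBasis, legStir_succ (k + 1), sub_smul, smul_sub,
      Finset.sum_sub_distrib]
    congr 1
    · rw [Finset.sum_range_succ' _ (k + 1), legStir_succ_zero, zero_smul, add_zero]
    · rw [Finset.sum_range_succ _ (k + 1), legStir_eq_zero (k + 1) (k + 1 + 1) (by omega)]
      simp [smul_smul, mul_comm]

/-- **Corollary (cor:staircase).** For the staircase shape
`σ_r = (r, r−1, …, 2, 1)` of height `r ≥ 1`, the boolean number of the
associated Ferrers graph satisfies, as rational numbers,
`B(σ_r) = Σ_{j=1}^{r} Σ_{ℓ=1}^{j} (−1)^{r+ℓ}·(2ℓ+1)·(ℓ²+ℓ)^r·j!·j! / ((ℓ+j+1)!·(j−ℓ)!)`. -/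
theorem boolean_staircase_eq_double_sum (r : ℕ) (hr : 1 ≤ r) :
    (booleanB r (fun i => r + 1 - i) : ℚ) =
      ∑ j ∈ Finset.Icc 1 r, ∑ ℓ ∈ Finset.Icc 1 j,
        (-1 : ℚ) ^ (r + ℓ) * (2 * ℓ + 1) * ((ℓ : ℚ) ^ 2 + ℓ) ^ r *
          (Nat.factorial j) * (Nat.factorial j) /
            ((Nat.factorial (ℓ + j + 1)) * (Nat.factorial (j - ℓ))) := by
  obtain ⟨k, rfl⟩ := Nat.exists_eq_add_of_le' hr
  rw [booleanB_eq_iterate k 1 _ fun i _ _ => by omega, iterate_diffOp]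
  simp only [Finset.sum_apply, Pi.smul_apply, smul_eq_mul]
  rw [← Finset.sum_sub_distrib, ← Finset.Ico_add_one_right_eq_Icc, Finset.sum_Ico_eq_sum_range]
  refine Finset.sum_congr rfl fun j _ => ?_
  rw [← mul_sub, stairBasis_diff, add_comm 1 j, legStir, Finset.sum_range_succ',
    ← Finset.Ico_add_one_right_eq_Icc, Finset.sum_Ico_eq_sum_range]
  simp only [Nat.add_sub_cancel, Nat.cast_zero, ne_eq, OfNat.ofNat_ne_zero, not_false_eq_true,
    zero_pow, add_zero, Nat.add_eq_zero_iff, one_ne_zero, and_false, mul_zero, zero_mul]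
  rw [Finset.sum_mul]
  refine Finset.sum_congr rfl fun ℓ hℓ => ?_
  have hℓ' := Finset.mem_range.mp hℓ
  rw [add_comm 1 ℓ, legWeight, if_pos (by omega)]
  ring
end

section
/- Let σ_r = (r, r−1, …, 2, 1) be the staircase shape of height r ≥ 1. Then B(σ_r) = g(r), where g(r) = G(r,1) is the r-th Genocchi number of the second kind; that is, the boolean numbers of the staircase shapes form the sequence of Genocchi numbers of the second kind. -/
/-- `G(r,x)` for `r ≥ 1`, `x ≥ 0`: `G(1,x) = 1` and
`G(r,x) = (x+1)²·G(r−1,x+1) − x·(x+1)·G(r−1,x)` for `r ≥ 2`.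
The Genocchi numbers of the second kind are `g(r) = G(r,1)`. -/
def genG : ℕ → ℕ → ℤ
  | 0, _ => 1
  | 1, _ => 1
  | r + 2, x =>
      ((x : ℤ) + 1) ^ 2 * genG (r + 1) (x + 1) - (x : ℤ) * ((x : ℤ) + 1) * genG (r + 1) x

/-- The `n`-th iterate of the operator `f ↦ x (x+1) (f (x+1) - f x)` on `x ↦ x ^ k`.
With `x` fixed and `k` varying, this is also the `n`-th iterate of the boolean recursion on the
sequence `k ↦ x ^ k`. -/
def stairH : ℕ → ℕ → ℤ → ℤ
  | 0, k, x => x ^ k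
  | n + 1, k, x => x * (x + 1) * (stairH n k (x + 1) - stairH n k x)

/-- The boolean recursion step applied to `k ↦ x ^ k`. -/
lemma pow_recursion (k : ℕ) (x : ℤ) :
    x * (x + 1) * ((x + 1) ^ k - x ^ k) = k * x ^ (k + 1) +
      ∑ ℓ ∈ Finset.Icc 1 k, ((k + 1).choose (ℓ + 1) : ℤ) * x ^ (k + 1 - ℓ) := by
  have hb : (1 + x) ^ (k + 1) = x ^ (k + 1) + (k + 1) * x ^ k
      + ∑ i ∈ Finset.range k, x ^ (k - (i + 1)) * ((k + 1).choose (i + 2) : ℤ) := by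
    rw [add_pow, Finset.sum_range_succ', Finset.sum_range_succ']
    simp
    ring
  have hs : ∑ ℓ ∈ Finset.Icc 1 k, ((k + 1).choose (ℓ + 1) : ℤ) * x ^ (k + 1 - ℓ)
      = x * ∑ i ∈ Finset.range k, x ^ (k - (i + 1)) * ((k + 1).choose (i + 2) : ℤ) := by
    rw [Finset.range_eq_Ico, Finset.mul_sum,
      Finset.sum_Ico_add' (fun ℓ => x * (x ^ (k - ℓ) * ((k + 1).choose (ℓ + 1) : ℤ))) 0 k 1]
    refine Finset.sum_congr (by ext; simp only [Finset.mem_Icc, Finset.mem_Ico]; omega) fun ℓ hℓ => ?_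
    have h : k + 1 - ℓ = (k - ℓ) + 1 := by
      have := Finset.mem_Ico.1 hℓ
      omega
    rw [h, pow_succ]
    ring
  rw [hs]
  linear_combination x * hb

/-- The boolean recursion commutes with the difference operator in `x`, so the identity for
powers propagates to all iterates. -/
lemma stairH_recursion (n k : ℕ) (x : ℤ) :
    stairH (n + 1) k x = k * stairH n (k + 1) x +
      ∑ ℓ ∈ Finset.Icc 1 k, ((k + 1).choose (ℓ + 1) : ℤ) * stairH n (k + 1 - ℓ) x := by
  induction n generalizing x with
  | zero => exact pow_recursion k x
  | succ n ih =>
    rw [stairH, ih, ih]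
    have hs : ∑ ℓ ∈ Finset.Icc 1 k, ((k + 1).choose (ℓ + 1) : ℤ) * stairH (n + 1) (k + 1 - ℓ) x
        = x * (x + 1) *
          (∑ ℓ ∈ Finset.Icc 1 k, ((k + 1).choose (ℓ + 1) : ℤ) * stairH n (k + 1 - ℓ) (x + 1)
          - ∑ ℓ ∈ Finset.Icc 1 k, ((k + 1).choose (ℓ + 1) : ℤ) * stairH n (k + 1 - ℓ) x) := by
      rw [← Finset.sum_sub_distrib, Finset.mul_sum]
      refine Finset.sum_congr rfl fun ℓ _ => ?_
      rw [stairH]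
      ring
    rw [hs, stairH]
    ring

/-- The shape here is `(k + n, …, k + 1, k)`, with `n + 1` rows. -/
lemma booleanB_stair (n k : ℕ) (hk : 1 ≤ k) :
    booleanB (n + 1) (fun i => k + (n + 1) - i) = stairH n k 1 := by
  induction n generalizing k with
  | zero => simp [booleanB, stairH, hk]
  | succ n ih =>
    have h0 : k + (n + 1 + 1) - (n + 2) = k := by omega
    rw [stairH_recursion, booleanB]
    simp only [h0]
    congr 1
    · rw [← ih (k + 1) (by omega)]
      congr 2
      funext i
      omega
    · refine Finset.sum_congr rfl fun ℓ hℓ => ?_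
      have := Finset.mem_Icc.1 hℓ
      rw [← ih (k + 1 - ℓ) (by omega)]
      congr 2
      funext i
      omega

lemma stairH_one (n x : ℕ) : stairH n 1 x = x * genG (n + 1) x := by
  induction n generalizing x with
  | zero => simp [stairH, genG]
  | succ n ih =>
    have h := ih (x + 1)
    push_cast at h
    rw [stairH, ih, h, genG]
    ring

/-- **Corollary (cor:Genocchi).** For the staircase shape
`σ_r = (r, r−1, …, 2, 1)` of height `r ≥ 1`, the boolean number `B(σ_r)` is the
`r`-th Genocchi number of the second kind `g(r) = G(r,1)`. -/
theorem boolean_staircase_eq_genocchi (r : ℕ) (hr : 1 ≤ r) :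
    booleanB r (fun i => r + 1 - i) = genG r 1 := by
  obtain ⟨n, rfl⟩ : ∃ n, r = n + 1 := ⟨r - 1, by omega⟩
  have h := stairH_one n 1
  rw [Nat.cast_one, one_mul] at h
  rw [← h, ← booleanB_stair n 1 le_rfl]
  congr 1
  funext i
  omega
end

section
/- Let σ_r = (r, r−1, …, 2, 1) be the staircase shape of height r ≥ 1. Then for every i with 1 ≤ i ≤ r, one has G(r,1) = Σ_{j=1}^{i} j · c_{σ_r}(i,j) · G(r+1−i, j). -/
theorem ferrersC_eq_zero_s10 (lam : ℕ → ℕ) (i : ℕ) (j : ℤ) (h : (i : ℤ) < j) :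
    ferrersC lam i j = 0 := by
  induction i generalizing j with
  | zero => rfl
  | succ n ih =>
    cases n with
    | zero =>
      push_cast at h
      rw [ferrersC, if_neg (by omega), if_neg (by omega)]
    | succ n =>
      push_cast at h ih
      rw [ferrersC, ih (j - 1) (by omega), ih j (by omega)]
      ring

/-- For the staircase both exponents in the defining recursion are `λ_i - λ_{i+1} = 1`. -/
theorem ferrersC_staircase_succ (r i : ℕ) (hi1 : 1 ≤ i) (hi2 : i + 1 ≤ r) (j : ℤ) :
    ferrersC (fun i => r + 1 - i) (i + 1) j =
      j * (j - 1) * ferrersC (fun i => r + 1 - i) i (j - 1)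
        - (j + 1) * j * ferrersC (fun i => r + 1 - i) i j := by
  obtain ⟨n, rfl⟩ := Nat.exists_eq_add_of_le' hi1
  have h : (r + 1 - (n + 1)) - (r + 1 - (n + 2)) = 1 := by omega
  rw [ferrersC]
  simp only [h, pow_one]

/-- For the staircase shape `σ_r = (r, r−1, …, 2, 1)` of height `r ≥ 1` and
every `1 ≤ i ≤ r`, one has `G(r,1) = Σ_{j=1}^{i} j·c_{σ_r}(i,j)·G(r+1−i, j)`. -/
theorem genG_expansion (r i : ℕ) (hr : 1 ≤ r) (hi1 : 1 ≤ i) (hi2 : i ≤ r) :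
    genG r 1 =
      ∑ j ∈ Finset.Icc 1 i,
        (j : ℤ) * ferrersC (fun i => r + 1 - i) i (j : ℤ) * genG (r + 1 - i) j := by
  induction i, hi1 using Nat.le_induction with
  | base => simp [ferrersC]
  | succ i hi1 ih =>
    rw [ih (by omega)]
    obtain ⟨s, hs⟩ : ∃ s, r = s + i + 1 := ⟨r - i - 1, by omega⟩
    rw [show r + 1 - i = s + 2 by omega, show r + 1 - (i + 1) = s + 1 by omega]
    have hzero := ferrersC_eq_zero_s10 (fun i => r + 1 - i) i ((i : ℤ) + 1) (by omega)
    have hc := ferrersC_staircase_succ r i hi1 hi2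
    generalize ferrersC (fun i => r + 1 - i) i = c at *
    generalize ferrersC (fun i => r + 1 - i) (i + 1) = d at *
    -- Summing only up to `m`, the two sums differ by the boundary term of the index shift;
    -- at `m = i` it is the summand `j = i + 1` on the right, since `c (i + 1) = 0`.
    have key : ∀ m : ℕ, ∑ j ∈ Finset.Icc 1 m, (j : ℤ) * c j * genG (s + 2) j =
        ∑ j ∈ Finset.Icc 1 m, (j : ℤ) * d j * genG (s + 1) j
          + (m : ℤ) * (m + 1) ^ 2 * c m * genG (s + 1) (m + 1) := by
      intro m
      induction m with
      | zero => simp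
      | succ m ihm =>
        rw [Finset.sum_Icc_succ_top (by omega), Finset.sum_Icc_succ_top (by omega), ihm, hc,
          genG]
        push_cast
        rw [show (m : ℤ) + 1 - 1 = m by ring]
        ring
    rw [key, Finset.sum_Icc_succ_top (by omega), hc]
    push_cast
    rw [hzero, show (i : ℤ) + 1 - 1 = i by ring]
    ring
end

section
/- Let r, k ≥ 1 and let λ be the rectangular Ferrers shape with r rows each of length k (so λ = (k, k, …, k)). Then for all integers i and j with 1 ≤ i ≤ r and 0 ≤ j ≤ i, one has c_λ(i,j) = (−1)^{i−j} · j! · S(i+1, j+1), where S denotes the Stirling numbers of the second kind. -/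
/-- The Stirling numbers of the second kind, via `S(0,0) = 1`, `S(n,0) = 0` for
`n ≥ 1`, `S(0,k) = 0` for `k ≥ 1`, and `S(n+1,k+1) = S(n,k) + (k+1)·S(n,k+1)`. -/
def stirling2 : ℕ → ℕ → ℕ
  | 0, 0 => 1
  | 0, _ + 1 => 0
  | _ + 1, 0 => 0
  | n + 1, k + 1 => stirling2 n k + (k + 1) * stirling2 n (k + 1)

/-- The closed form without the restriction `j ≤ i`, with a sign free of truncated subtraction. -/
theorem ferrersC_const_succ (k n j : ℕ) :
    ferrersC (fun _ => k) (n + 1) (j : ℤ) =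
      (-1 : ℤ) ^ (n + 1 + j) * (Nat.factorial j) * stirling2 (n + 2) (j + 1) := by
  induction n generalizing j with
  | zero =>
    match j with
    | 0 => simp [ferrersC, stirling2]
    | 1 => simp [ferrersC, stirling2]
    | j + 2 =>
      have h0 : ((j + 2 : ℕ) : ℤ) ≠ 0 := by omega
      have h1 : ((j + 2 : ℕ) : ℤ) ≠ 1 := by omega
      simp only [ferrersC, if_neg h0, if_neg h1]
      simp [stirling2]
  | succ n ih =>
    have hS : stirling2 (n + 1 + 2) (j + 1) =
        stirling2 (n + 2) j + (j + 1) * stirling2 (n + 2) (j + 1) := rfl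
    rw [ferrersC, ih j, hS]
    cases j with
    | zero =>
      simp [stirling2, pow_succ]
    | succ j =>
      have hpred : ((j + 1 : ℕ) : ℤ) - 1 = (j : ℤ) := by push_cast; ring
      rw [hpred, ih j, Nat.factorial_succ]
      simp only [Nat.sub_self, pow_zero]
      push_cast
      ring

/-- For the rectangular Ferrers shape `λ = (k, …, k)` with `r ≥ 1` rows of
length `k ≥ 1`, and all `1 ≤ i ≤ r`, `0 ≤ j ≤ i`, one has
`c_λ(i,j) = (−1)^{i−j}·j!·S(i+1, j+1)` where `S` is the Stirling number of the
second kind. -/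
theorem c_rectangle_eq_stirling (r k : ℕ) (hr : 1 ≤ r) (hk : 1 ≤ k)
    (i j : ℕ) (hi1 : 1 ≤ i) (hi2 : i ≤ r) (hj : j ≤ i) :
    ferrersC (fun _ => k) i (j : ℤ) =
      (-1 : ℤ) ^ (i - j) * (Nat.factorial j) * stirling2 (i + 1) (j + 1) := by
  obtain ⟨n, rfl⟩ : ∃ n, i = n + 1 := ⟨i - 1, by omega⟩
  have hsign : (-1 : ℤ) ^ (n + 1 + j) = (-1) ^ (n + 1 - j) := by
    have hsum : n + 1 + j = (n + 1 - j) + 2 * j := by omega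
    rw [hsum, pow_add, pow_mul]
    simp
  rw [ferrersC_const_succ, hsign]
end

section
/- Let r, k ≥ 1 and let λ be the rectangular Ferrers shape with r rows each of length k (so λ = (k, k, …, k), whose Ferrers graph is the complete bipartite graph K_{r,k}). Then the boolean number satisfies B(λ) = Σ_{j=1}^{r} (−1)^{r−j} · j! · S(r+1, j+1) · j^k, where S denotes the Stirling numbers of the second kind. -/
/-- The linear operator on sequences that adds one row to a rectangular shape. -/
def boolStep (f : ℕ → ℤ) (k : ℕ) : ℤ :=
  (k : ℤ) * f k + ∑ ℓ ∈ Finset.Icc 1 k, ((k + 1).choose (ℓ + 1) : ℤ) * f (k - ℓ)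

lemma boolStep_pow (x : ℤ) (k : ℕ) :
    boolStep (fun m => x ^ m) k = (x + 1) * (x + 1) ^ k - (x + 1) * x ^ k := by
  have h := add_pow (1 : ℤ) x (k + 1)
  -- Split off the terms of index `0` and `1` of the binomial expansion of `(1 + x) ^ (k + 1)`.
  rw [Finset.sum_range_succ', Finset.sum_range_succ'] at h
  have hs : ∑ ℓ ∈ Finset.Icc 1 k, ((k + 1).choose (ℓ + 1) : ℤ) * x ^ (k - ℓ) =
      ∑ i ∈ Finset.range k, ((k + 1).choose (i + 1 + 1) : ℤ) * x ^ (k - (i + 1)) := by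
    rw [Finset.range_eq_Ico, Finset.sum_Ico_add' (fun ℓ => ((k + 1).choose (ℓ + 1) : ℤ) *
      x ^ (k - ℓ)) 0 k 1]
    rfl
  simp only [one_pow, one_mul, Nat.add_sub_add_right, zero_add, Nat.choose_one_right,
    Nat.choose_zero_right, Nat.sub_zero, Nat.cast_one, mul_one] at h
  simp only [mul_comm (x ^ _)] at h
  push_cast at h
  unfold boolStep
  rw [hs]
  linear_combination -h

lemma boolStep_sum (s : Finset ℕ) (a : ℕ → ℤ) (f : ℕ → ℕ → ℤ) (k : ℕ) :
    boolStep (fun m => ∑ j ∈ s, a j * f j m) k = ∑ j ∈ s, a j * boolStep (f j) k := by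
  simp only [boolStep, mul_add, Finset.sum_add_distrib, Finset.mul_sum]
  rw [Finset.sum_comm]
  simp only [mul_left_comm]

lemma stirling2_eq_zero_of_lt : ∀ {n k : ℕ}, n < k → stirling2 n k = 0
  | 0, _ + 1, _ => rfl
  | n + 1, k + 1, h => by
    rw [stirling2, stirling2_eq_zero_of_lt (by omega : n < k),
      stirling2_eq_zero_of_lt (by omega : n < k + 1), mul_zero, add_zero]

/-- The coefficient `j! S(r + 1, j + 1)`: the number of ordered set partitions of the subsets of
an `r`-element set into `j` blocks. -/
def boolCoeff (r j : ℕ) : ℤ := (Nat.factorial j) * stirling2 (r + 1) (j + 1)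

lemma boolCoeff_succ_zero (r : ℕ) : boolCoeff (r + 1) 0 = boolCoeff r 0 := by
  simp [boolCoeff, stirling2]

lemma boolCoeff_succ_succ (r j : ℕ) :
    boolCoeff (r + 1) (j + 1) = (j + 1) * boolCoeff r j + (j + 2) * boolCoeff r (j + 1) := by
  simp only [boolCoeff]
  rw [stirling2, Nat.factorial_succ]
  push_cast
  ring

lemma boolCoeff_self_succ (r : ℕ) : boolCoeff r (r + 1) = 0 := by
  simp [boolCoeff, stirling2_eq_zero_of_lt (show r + 1 < r + 1 + 1 by omega)]

/-- The closed form, summed from `j = 0` so as to hold for `k = 0` too. The row count is `r + 1`;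
with no rows the right-hand side would be `0 ^ k`. -/
lemma booleanB_const (r k : ℕ) :
    booleanB (r + 1) (fun _ => k) =
      ∑ j ∈ Finset.range (r + 2), ((-1) ^ (r + 1 + j) * boolCoeff (r + 1) j) * (j : ℤ) ^ k := by
  induction r generalizing k with
  | zero =>
    rcases k with _ | k <;> simp [booleanB, Finset.sum_range_succ, boolCoeff, stirling2]
  | succ r ih =>
    have hB : booleanB (r + 1 + 1) (fun _ => k) =
        boolStep (fun m => booleanB (r + 1) (fun _ => m)) k := rfl
    rw [hB]
    simp only [ih]
    rw [boolStep_sum _ _ (fun j m => (j : ℤ) ^ m)]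
    simp only [boolStep_pow, mul_sub, Finset.sum_sub_distrib]
    -- The terms `(j + 1) ^ k` are matched with index `j + 1` on the right; the terms `j ^ k` keep
    -- their index, and are padded by a zero term at `j = r + 2`.
    have hpad : ∑ j ∈ Finset.range (r + 2), (-1) ^ (r + 1 + j) * boolCoeff (r + 1) j *
          (((j : ℤ) + 1) * (j : ℤ) ^ k) =
        ∑ j ∈ Finset.range (r + 3), (-1) ^ (r + 1 + j) * boolCoeff (r + 1) j *
          (((j : ℤ) + 1) * (j : ℤ) ^ k) := by
      rw [Finset.sum_range_succ _ (r + 2), boolCoeff_self_succ]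
      simp
    rw [hpad, Finset.sum_range_succ' _ (r + 2), Finset.sum_range_succ' _ (r + 1 + 1),
      boolCoeff_succ_zero (r + 1), ← sub_sub, ← Finset.sum_sub_distrib, sub_eq_add_neg]
    congr 1
    · refine Finset.sum_congr rfl fun j _ => ?_
      rw [boolCoeff_succ_succ (r + 1)]
      push_cast
      ring
    · push_cast
      ring

/-- **Proposition (prop:bipartite).** For `r, k ≥ 1` and the rectangular
Ferrers shape `λ = (k, …, k)` with `r` rows (whose Ferrers graph is the
complete bipartite graph `K_{r,k}`), the boolean number satisfies
`B(K_{r,k}) = Σ_{j=1}^{r} (−1)^{r−j}·j!·S(r+1, j+1)·j^k`. -/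
theorem boolean_completeBipartite (r k : ℕ) (hr : 1 ≤ r) (hk : 1 ≤ k) :
    booleanB r (fun _ => k) =
      ∑ j ∈ Finset.Icc 1 r,
        (-1 : ℤ) ^ (r - j) * (Nat.factorial j) * stirling2 (r + 1) (j + 1) *
          (j : ℤ) ^ k := by
  obtain ⟨r, rfl⟩ := Nat.exists_eq_succ_of_ne_zero (Nat.one_le_iff_ne_zero.mp hr)
  have hIcc : Finset.Icc 1 (r + 1) = Finset.Ico (0 + 1) (r + 1 + 1) := rfl
  rw [Nat.succ_eq_add_one, booleanB_const, Finset.sum_range_succ', hIcc,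
    ← Finset.sum_Ico_add', ← Finset.range_eq_Ico, Nat.cast_zero,
    zero_pow (Nat.one_le_iff_ne_zero.mp hk), mul_zero, add_zero]
  refine Finset.sum_congr rfl fun j hj => ?_
  have hjr : j + 1 ≤ r + 1 := Finset.mem_range.mp hj
  have hsign : (-1 : ℤ) ^ (r + 1 + (j + 1)) = (-1) ^ (r + 1 - (j + 1)) := by
    obtain ⟨d, hd⟩ := Nat.exists_eq_add_of_le hjr
    rw [hd, Nat.add_sub_cancel_left, show j + 1 + d + (j + 1) = 2 * (j + 1) + d by ring, pow_add,
      pow_mul]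
    simp
  rw [hsign, boolCoeff, ← mul_assoc]
end

section
/- Let λ = (λ_1, …, λ_r) be a Ferrers shape with all parts positive (λ_r ≥ 1), and let λ′ be its conjugate (transpose) partition, with λ_1 rows. Then the boolean numbers agree: B(λ) = B(λ′). -/
/-! ### Row and column operators -/

open Polynomial in
/-- The operator `p ↦ X p'` on `ℤ[X]` attached to a row step. -/
noncomputable def rowOp : Module.End ℤ ℤ[X] :=
  LinearMap.mulLeft ℤ (X : ℤ[X]) ∘ₗ (derivative : ℤ[X] →ₗ[ℤ] ℤ[X])

open Polynomial in
/-- The operator `p ↦ (X - 1) (X p)'` on `ℤ[X]` attached to a column step. -/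
noncomputable def colOp : Module.End ℤ ℤ[X] :=
  LinearMap.mulLeft ℤ (X - 1 : ℤ[X]) ∘ₗ (derivative : ℤ[X] →ₗ[ℤ] ℤ[X]) ∘ₗ
    LinearMap.mulLeft ℤ (X : ℤ[X])

theorem rowOp_mul_colOp : rowOp * colOp = colOp * rowOp + colOp + rowOp + 1 := by
  refine LinearMap.ext fun p => ?_
  simp [rowOp, colOp]
  ring

theorem rowOp_one : rowOp 1 = 0 := by simp [rowOp]

theorem eval_colOp (p : Polynomial ℤ) : (colOp p).eval 1 = 0 := by simp [colOp]

/-- The operator of a word in row steps (`true`) and column steps (`false`): the product of the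
operators of its letters, so that the last letter acts first. -/
noncomputable def wordOp (w : List Bool) : Module.End ℤ (Polynomial ℤ) :=
  (w.map fun b => if b then rowOp else colOp).prod

theorem wordOp_append (u v : List Bool) : wordOp (u ++ v) = wordOp u * wordOp v := by
  simp [wordOp]

theorem wordOp_replicate_false (n : ℕ) : wordOp (List.replicate n false) = colOp ^ n := by
  simp [wordOp]

/-- The value of a word: its operator is applied to the polynomial `1`, and the result is
evaluated at `1`. -/
noncomputable def wordValue (w : List Bool) : ℤ := (wordOp w 1).eval 1

theorem wordValue_nil : wordValue [] = 1 := by simp [wordValue, wordOp]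

theorem wordValue_col_cons (w : List Bool) : wordValue (false :: w) = 0 := by
  simp [wordValue, wordOp, eval_colOp]

theorem wordValue_append_row (w : List Bool) : wordValue (w ++ [true]) = 0 := by
  simp [wordValue, wordOp, rowOp_one]

theorem wordValue_rel (u v : List Bool) :
    wordValue (u ++ true :: false :: v) = wordValue (u ++ false :: true :: v)
      + wordValue (u ++ false :: v) + wordValue (u ++ true :: v) + wordValue (u ++ v) := by
  have h : wordOp (u ++ true :: false :: v) = wordOp (u ++ false :: true :: v)
      + wordOp (u ++ false :: v) + wordOp (u ++ true :: v) + wordOp (u ++ v) := by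
    have h1 : wordOp (true :: false :: v) = rowOp * colOp * wordOp v := by
      simp [wordOp, mul_assoc]
    simp only [wordOp_append, h1, rowOp_mul_colOp]
    simp only [wordOp, List.map_cons, List.prod_cons]
    simp only [if_true, Bool.false_eq_true, if_false]
    noncomm_ring
  simp [wordValue, h]

/-! ### Symmetry of word values under transposition -/

/-- The four conditions, all satisfied by `wordValue`, determine a function on words:
the last one pushes the first `C` that
follows an initial block of `R`s to the front, at the expense of shorter words. -/
theorem wordValue_unique (F : List Bool → ℤ) (h0 : F [] = 1)
    (hC : ∀ w, F (false :: w) = 0) (hR : ∀ w, F (w ++ [true]) = 0)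
    (hrel : ∀ u v, F (u ++ true :: false :: v) = F (u ++ false :: true :: v)
      + F (u ++ false :: v) + F (u ++ true :: v) + F (u ++ v)) :
    ∀ w, F w = wordValue w := by
  suffices H : ∀ n, ∀ w : List Bool, w.length = n → F w = wordValue w from fun w => H _ w rfl
  intro n
  induction n using Nat.strong_induction_on with
  | _ n ih =>
    have key : ∀ k (v : List Bool), k + 1 + v.length = n →
        F (List.replicate k true ++ false :: v)
          = wordValue (List.replicate k true ++ false :: v) := by
      intro k
      induction k with
      | zero => intro v _; simp [hC, wordValue_col_cons]
      | succ k ihk =>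
        intro v hv
        have e : List.replicate (k + 1) true ++ false :: v
            = List.replicate k true ++ true :: false :: v := by
          simp [List.replicate_succ']
        rw [e, hrel, wordValue_rel, ihk (true :: v) (by simp; omega),
          ih (k + 1 + v.length) (by omega) _ (by simp; omega),
          ih (k + 1 + v.length) (by omega) (_ ++ true :: v) (by simp; omega),
          ih (k + v.length) (by omega) (_ ++ v) (by simp)]
    have shape : ∀ w : List Bool, (∃ k, w = List.replicate k true) ∨
        ∃ k v, w = List.replicate k true ++ false :: v := by
      intro w
      induction w with
      | nil => exact Or.inl ⟨0, rfl⟩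
      | cons b w ihw =>
        cases b with
        | false => exact Or.inr ⟨0, w, rfl⟩
        | true =>
          rcases ihw with ⟨k, rfl⟩ | ⟨k, v, rfl⟩
          · exact Or.inl ⟨k + 1, rfl⟩
          · exact Or.inr ⟨k + 1, v, rfl⟩
    intro w hw
    rcases shape w with ⟨k, rfl⟩ | ⟨k, v, rfl⟩
    · cases k with
      | zero => simp [h0, wordValue_nil]
      | succ k => rw [List.replicate_succ', hR, wordValue_append_row]
    · exact key k v (by simpa [add_assoc, add_comm, add_left_comm] using hw)

/-- The word read backwards with its two letters exchanged: the effect of a transposition on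
boundary words. -/
def flipWord (w : List Bool) : List Bool := (w.map not).reverse

theorem flipWord_append (u v : List Bool) : flipWord (u ++ v) = flipWord v ++ flipWord u := by
  simp [flipWord]

theorem wordValue_flip (w : List Bool) : wordValue (flipWord w) = wordValue w := by
  refine wordValue_unique (fun w => wordValue (flipWord w)) wordValue_nil ?_ ?_ ?_ w
  · intro w
    simpa [flipWord] using wordValue_append_row (flipWord w)
  · intro w
    simpa [flipWord] using wordValue_col_cons (flipWord w)
  · intro u v
    have h := wordValue_rel (flipWord v) (flipWord u)
    simp only [flipWord, List.map_append, List.map_cons, List.reverse_append, List.reverse_cons,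
      Bool.not_true, Bool.not_false, List.append_assoc, List.cons_append, List.nil_append] at h ⊢
    linarith

/-! ### The recursion for boolean numbers -/

/-- Moving a row step past `m` column steps. -/
theorem row_mul_col_pow {A : Type*} [Ring A] {R C : A} (h : R * C = C * R + C + R + 1) (m : ℕ) :
    R * C ^ m = (C + 1) ^ m * R + (C + 1) * ((C + 1) ^ m - C ^ m) := by
  induction m with
  | zero => simp
  | succ m ih =>
    have h1 : R * C ^ (m + 1) = (C + 1) * (R * C ^ m + C ^ m) := by
      rw [pow_succ', ← mul_assoc, h]; noncomm_ring
    rw [h1, ih, pow_succ' (C + 1) m, pow_succ' C m]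
    noncomm_ring

theorem col_pow_expand {A : Type*} [Ring A] (C : A) (m : ℕ) :
    (C + 1) * ((C + 1) ^ m - C ^ m)
      = (m : ℤ) • C ^ m + ∑ ℓ ∈ Finset.Icc 1 m, ((m + 1).choose (ℓ + 1) : ℤ) • C ^ (m - ℓ) := by
  have h1 : (C + 1) ^ (m + 1)
      = C ^ (m + 1) + ((m : ℤ) + 1) • C ^ m
        + ∑ ℓ ∈ Finset.Icc 1 m, ((m + 1).choose (ℓ + 1) : ℤ) • C ^ (m - ℓ) := by
    have hI : Finset.Icc 1 m = Finset.Ico (0 + 1) (m + 1) := rfl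
    rw [add_comm C 1, (Commute.one_left C).add_pow, Finset.sum_range_succ',
      Finset.sum_range_succ', hI, ← Finset.sum_Ico_add', ← Finset.range_eq_Ico]
    have e : ∀ k, m + 1 - (k + 1 + 1) = m - (k + 1) := fun k => by omega
    simp only [one_pow, one_mul, e, zsmul_eq_mul, Int.cast_natCast, zero_add, Nat.choose_one_right,
      Nat.choose_zero_right, Nat.add_sub_cancel, Nat.sub_zero, Nat.cast_one, mul_one,
      ← Nat.cast_comm]
    push_cast
    abel
  rw [mul_sub, ← pow_succ', h1, add_mul, ← pow_succ', add_smul]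
  simp only [one_smul, one_mul]
  abel

/-- The recursion for boolean numbers, at the level of words: the last row step and the `m` column
steps after it are replaced by at most `m` column steps. -/
theorem wordValue_append_row_col (u : List Bool) (m : ℕ) :
    wordValue (u ++ true :: List.replicate m false)
      = m * wordValue (u ++ List.replicate m false)
        + ∑ ℓ ∈ Finset.Icc 1 m,
          ((m + 1).choose (ℓ + 1) : ℤ) * wordValue (u ++ List.replicate (m - ℓ) false) := by
  have h1 : wordOp (true :: List.replicate m false) = rowOp * colOp ^ m := by
    simp [wordOp]
  have h2 : (rowOp * colOp ^ m) 1 = ((m : ℤ) • colOp ^ m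
      + ∑ ℓ ∈ Finset.Icc 1 m, ((m + 1).choose (ℓ + 1) : ℤ) • colOp ^ (m - ℓ)) 1 := by
    rw [row_mul_col_pow rowOp_mul_colOp, col_pow_expand, LinearMap.add_apply, Module.End.mul_apply,
      rowOp_one, map_zero, zero_add]
  simp only [wordValue, wordOp_append, h1, wordOp_replicate_false]
  rw [Module.End.mul_apply, h2]
  simp only [LinearMap.add_apply, LinearMap.smul_apply, LinearMap.sum_apply, map_add, map_sum,
    map_smul, Polynomial.eval_add, Polynomial.eval_finsetSum, Polynomial.eval_smul, smul_eq_mul,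
    Module.End.mul_apply]

/-- The boundary word `R C^(f 1 - f 2) R C^(f 2 - f 3) ⋯ R C^(f n - f (n+1))`. For a shape with
`n` rows it is the whole boundary when `f (n + 1) = 0`. -/
def boundaryWord : ℕ → (ℕ → ℕ) → List Bool
  | 0, _ => []
  | n + 1, f => boundaryWord n f ++ true :: List.replicate (f (n + 1) - f (n + 2)) false

theorem boundaryWord_congr {n : ℕ} {f g : ℕ → ℕ}
    (h : ∀ i, 1 ≤ i → i ≤ n → f i - f (i + 1) = g i - g (i + 1)) :
    boundaryWord n f = boundaryWord n g := by
  induction n with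
  | zero => rfl
  | succ n ih =>
    simp only [boundaryWord]
    rw [ih fun i h1 h2 => h i h1 (by omega), h (n + 1) (by omega) le_rfl]

theorem boundaryWord_succ' (n : ℕ) (f : ℕ → ℕ) :
    boundaryWord (n + 1) f
      = true :: List.replicate (f 1 - f 2) false ++ boundaryWord n (fun i => f (i + 1)) := by
  induction n with
  | zero => simp [boundaryWord]
  | succ n ih =>
    rw [boundaryWord, ih]
    simp [boundaryWord]

theorem booleanB_eq_wordValue (n : ℕ) (f : ℕ → ℕ) (hf : Antitone f) :
    booleanB (n + 1) f
      = wordValue (boundaryWord (n + 1) f ++ List.replicate (f (n + 2)) false) := by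
  -- The trailing column steps complete the last row to its full length.
  have full : ∀ n f, Antitone f →
      boundaryWord (n + 1) f ++ List.replicate (f (n + 2)) false
        = boundaryWord n f ++ true :: List.replicate (f (n + 1)) false := by
    intro n f hf
    have h : f (n + 2) ≤ f (n + 1) := hf (by omega)
    simp only [boundaryWord, List.append_assoc, List.cons_append, ← List.replicate_add]
    rw [Nat.sub_add_cancel h]
  induction n generalizing f with
  | zero =>
    rw [full 0 f hf, wordValue_append_row_col]
    simp only [boundaryWord, List.nil_append, booleanB, zero_add]
    have hv : ∀ k, wordValue (List.replicate k false) = if k = 0 then 1 else 0 := by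
      intro k
      cases k with
      | zero => simp [wordValue_nil]
      | succ k => simp [List.replicate_succ, wordValue_col_cons]
    simp only [hv]
    rcases Nat.eq_zero_or_pos (f 1) with h | h
    · simp [h]
    · -- Only the term with `ℓ = f 1` survives.
      rw [Finset.sum_eq_single (f 1)]
      · have h' : f 1 ≠ 0 := by omega
        simp [h']
      · intro ℓ hℓ hne
        have := Finset.mem_Icc.1 hℓ
        have h' : f 1 - ℓ ≠ 0 := by omega
        simp [h']
      · intro hn
        exact absurd (Finset.mem_Icc.2 ⟨h, le_rfl⟩) hn
  | succ n ih =>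
    rw [full (n + 1) f hf, wordValue_append_row_col, booleanB, ih f hf]
    congr 1
    refine Finset.sum_congr rfl fun ℓ hℓ => ?_
    have hl : ℓ ≤ f (n + 2) := (Finset.mem_Icc.1 hℓ).2
    rw [ih (fun i => f i - ℓ) fun i j hij => Nat.sub_le_sub_right (hf hij) ℓ]
    congr 3
    refine boundaryWord_congr fun i _ h2 => ?_
    have := hf (show i + 1 ≤ n + 2 by omega)
    omega

theorem booleanB_congr {r : ℕ} {f g : ℕ → ℕ} (h : ∀ i, 1 ≤ i → i ≤ r → f i = g i) :
    booleanB r f = booleanB r g := by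
  induction r generalizing f g with
  | zero => rfl
  | succ r ih =>
    cases r with
    | zero => simp [booleanB, h 1 le_rfl le_rfl]
    | succ r =>
      rw [booleanB, booleanB, h (r + 2) (by omega) le_rfl,
        ih fun i h1 h2 => h i h1 (by omega)]
      congr 1
      refine Finset.sum_congr rfl fun ℓ _ => ?_
      rw [ih (f := fun i => f i - ℓ) (g := fun i => g i - ℓ)
        fun i h1 h2 => by rw [h i h1 (by omega)]]

/-! ### Conjugate shapes -/

/-- The `j`-th part of the conjugate of the shape `(f 1, …, f r)`. -/
def conjPart (r : ℕ) (f : ℕ → ℕ) (j : ℕ) : ℕ :=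
  ((Finset.Icc 1 r).filter (fun i => j ≤ f i)).card

theorem conjPart_antitone (r : ℕ) (f : ℕ → ℕ) : Antitone (conjPart r f) := by
  intro j k hjk
  refine Finset.card_le_card fun i hi => ?_
  simp only [Finset.mem_filter] at hi ⊢
  exact ⟨hi.1, hjk.trans hi.2⟩

theorem conjPart_eq_zero {r : ℕ} {f : ℕ → ℕ} (hf : Antitone f) {j : ℕ} (hj : f 1 < j) :
    conjPart r f j = 0 := by
  rw [conjPart, Finset.card_eq_zero, Finset.filter_eq_empty_iff]
  intro i hi
  have := hf (Finset.mem_Icc.1 hi).1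
  omega

theorem conjPart_succ (r : ℕ) (f : ℕ → ℕ) (j : ℕ) :
    conjPart (r + 1) f j = conjPart r (fun i => f (i + 1)) j + if j ≤ f 1 then 1 else 0 := by
  have hI : Finset.Icc 1 (r + 1) = Finset.Ico (0 + 1) (r + 1 + 1) := rfl
  have hI' : Finset.Icc 1 r = Finset.Ico (0 + 1) (r + 1) := rfl
  simp only [conjPart, Finset.card_filter, hI, hI']
  rw [← Finset.sum_Ico_add', ← Finset.sum_Ico_add', ← Finset.range_eq_Ico, ← Finset.range_eq_Ico,
    Finset.sum_range_succ']

theorem boundaryWord_append_zeros (n d : ℕ) (g : ℕ → ℕ) (hg : ∀ j, n < j → g j = 0) :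
    boundaryWord (n + d) g = boundaryWord n g ++ List.replicate d true := by
  induction d with
  | zero => simp
  | succ d ih =>
    rw [← add_assoc, boundaryWord, ih, hg (n + d + 1) (by omega), List.replicate_succ']
    simp

/-- Transposing the diagram. The induction removes the first row of `f`, which is the
first block `R C^(f 1 - f 2)` of its boundary word. In the conjugate this lowers each of the
first `f 1` parts by one, which removes the last `C` and makes the last `f 1 - f 2` parts zero. -/
theorem flip_boundaryWord (r : ℕ) (f : ℕ → ℕ) (hf : Antitone f)
    (hpos : ∀ i, 1 ≤ i → i ≤ r → 1 ≤ f i) (hz : f (r + 1) = 0) :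
    flipWord (boundaryWord r f) = boundaryWord (f 1) (conjPart r f) := by
  induction r generalizing f with
  | zero =>
    rw [zero_add] at hz
    simp [hz, boundaryWord, flipWord]
  | succ r ih =>
    have hf' : Antitone fun i => f (i + 1) := fun i j hij => hf (by omega)
    have h12 : f 2 ≤ f 1 := hf (by omega)
    obtain ⟨n, hn⟩ : ∃ n, f 1 = n + 1 :=
      ⟨f 1 - 1, by have := hpos 1 le_rfl (by omega); omega⟩
    have hzero : ∀ j, f 2 < j → conjPart r (fun i => f (i + 1)) j = 0 :=
      fun j hj => conjPart_eq_zero hf' hj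
    have hlast : boundaryWord (f 1) (conjPart (r + 1) f)
        = boundaryWord (f 1) (conjPart r fun i => f (i + 1)) ++ [false] := by
      rw [hn, boundaryWord, boundaryWord]
      have e : boundaryWord n (conjPart (r + 1) f)
          = boundaryWord n (conjPart r fun i => f (i + 1)) := by
        refine boundaryWord_congr fun i _ h2 => ?_
        rw [conjPart_succ, conjPart_succ, if_pos (by omega), if_pos (by omega)]
        omega
      rw [e, conjPart_succ, conjPart_succ, if_pos (by omega), if_neg (by omega),
        hzero (n + 2) (by omega)]
      simp [List.replicate_succ']
    have hsplit := boundaryWord_append_zeros (f 2) (f 1 - f 2) _ hzero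
    rw [Nat.add_sub_cancel' h12] at hsplit
    rw [hlast, hsplit, boundaryWord_succ', flipWord_append,
      ih (fun i => f (i + 1)) hf' (fun i h1 h2 => hpos (i + 1) (by omega) (by omega)) hz]
    simp [flipWord]

/-- The boolean number is invariant under conjugation (transposition) of the
Ferrers shape: for a shape `λ = (λ_1, …, λ_r)` with all parts positive, the
conjugate shape `λ′` has `λ_1` rows with parts `λ′_j = #{ i ∈ [1,r] : λ_i ≥ j }`,
and `B(λ) = B(λ′)`. -/
theorem boolean_conjugate (r : ℕ) (lam : ℕ → ℕ) (hr : 1 ≤ r)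
    (hshape : ∀ i, 1 ≤ i → i < r → lam (i + 1) ≤ lam i)
    (hpos : 1 ≤ lam r) :
    booleanB r lam =
      booleanB (lam 1)
        (fun j => ((Finset.Icc 1 r).filter (fun i => j ≤ lam i)).card) := by
  -- The values of `lam` outside `[1, r]` are irrelevant; `f` replaces them to get an antitone
  -- function that vanishes after the last row.
  obtain ⟨f, hfdef⟩ : ∃ f : ℕ → ℕ, ∀ i, f i = if i ≤ r then lam (max i 1) else 0 :=
    ⟨_, fun _ => rfl⟩
  have hfl : ∀ i, 1 ≤ i → i ≤ r → f i = lam i := by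
    intro i h1 h2
    rw [hfdef, if_pos h2, max_eq_left h1]
  have hf : Antitone f := by
    refine antitone_nat_of_succ_le fun i => ?_
    rcases Nat.lt_or_ge i r with h | h
    · rw [hfdef, hfdef, if_pos (by omega), if_pos (by omega), max_eq_left (by omega)]
      rcases Nat.eq_zero_or_pos i with rfl | h0
      · simp
      · rw [max_eq_left (by omega)]
        exact hshape i h0 h
    · rw [hfdef, if_neg (by omega)]
      exact Nat.zero_le _
  have hz : f (r + 1) = 0 := by rw [hfdef, if_neg (by omega)]
  have hfpos : ∀ i, 1 ≤ i → i ≤ r → 1 ≤ f i := fun i _ h2 =>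
    (hpos.trans_eq (hfl r hr le_rfl).symm).trans (hf h2)
  have hconj : (fun j => ((Finset.Icc 1 r).filter (fun i => j ≤ lam i)).card) = conjPart r f := by
    funext j
    refine congrArg Finset.card (Finset.filter_congr fun i hi => ?_)
    rw [hfl i (Finset.mem_Icc.1 hi).1 (Finset.mem_Icc.1 hi).2]
  have hvalue : ∀ n g, 1 ≤ n → Antitone g → g (n + 1) = 0 →
      booleanB n g = wordValue (boundaryWord n g) := by
    intro n g hn hg hzero
    obtain ⟨k, rfl⟩ := Nat.exists_eq_add_of_le' hn
    rw [booleanB_eq_wordValue k g hg, hzero]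
    simp
  rw [hconj, ← hfl 1 le_rfl hr, booleanB_congr (g := f) fun i h1 h2 => (hfl i h1 h2).symm,
    hvalue r f hr hf hz,
    hvalue (f 1) _ (hfpos 1 le_rfl hr) (conjPart_antitone r f)
      (conjPart_eq_zero hf (Nat.lt_succ_self _)),
    ← flip_boundaryWord r f hf hfpos hz, wordValue_flip]
end
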